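/- Let p be an odd prime and let y be a nonzero element of Z[1/p] ∩ (−1/2, 1/2) with v_p(y) = −k. Then for μ-almost all α ∈ pZ_p, the MR expansion of α is infinite and the frequency of y among the odd-position partial quotients equals p^{−2k+1}: lim_{n→∞} (1/n)·#{0 ≤ i ≤ n − 1 : a_{2i+1} = y} = p^{−2k+1}, where (a_j) are the partial quotients of the MR expansion of α. -/

import Mathlib

/-!
The remainders `x = α_{2n} - a_{2n}` lie in `p ℤ_p`; for `α ∈ p ℤ_p` the first remainder is `α` itself, since `s(α) = 0`. Two steps of
the algorithm act on remainders by `mrMap`, the composite of two half steps `x ↦ x⁻¹ - fl x⁻¹`,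
first with `fl = t` and then with `fl = s`, and `a_{2n+1} = t(x⁻¹)` (`mrPQ_odd`).

On a ball avoiding `0` inversion multiplies all distances by the constant `‖y‖⁻²`, where `y` is the
center, hence multiplies Haar measure by a constant (`measure_inv_preimage`). A floor map is
constant on the cosets of a ball, and subtracting it moves every point into that ball, so each branch of a half step
maps onto the whole ball and has constant Jacobian (`measure_branch`). Consequently `mrMap`
preserves the probability measure `μ` on `p ℤ_p` (`measurePreserving_mrMap`), and the event
`t(x⁻¹) = y` has measure `p ^ (-2 * k + 1)` and is independent of everything determined by
`mrMap x` (`measure_digit_inter`).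

The events `a_{2i+1} = y` are thus pairwise independent with this common probability, and the strong
law of large numbers gives the frequency (`frequency_of_indep`). The expansion can end only if some
iterate of `mrMap` is rational; as `ℚ` is countable and `mrMap` preserves `μ`, this happens with
probability `0`.
-/

open scoped Classical
open MeasureTheory

/-- The `p`-adic valuation on `ℚ_[p]`, with `vp p 0 = ⊤` (i.e. `v_p(0) = +∞`). -/
noncomputable def vp (p : ℕ) [Fact p.Prime] (x : ℚ_[p]) : WithTop ℤ :=
  if x = 0 then ⊤ else (x.valuation : WithTop ℤ)

/-- `a ∈ ℤ[1/p]`, i.e. `a` is a rational whose denominator is a power of `p`. -/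
def InZinvp (p : ℕ) (a : ℚ) : Prop := ∃ n : ℕ, ∃ m : ℤ, a * (p : ℚ) ^ n = m

/-- `a = s(α)`: the unique element of `ℤ[1/p] ∩ (-p/2, p/2)` with `v_p(α - a) ≥ 1`. -/
def IsSFloor (p : ℕ) [Fact p.Prime] (α : ℚ_[p]) (a : ℚ) : Prop :=
  InZinvp p a ∧ -((p : ℚ) / 2) < a ∧ a < (p : ℚ) / 2 ∧ 1 ≤ vp p (α - (a : ℚ_[p]))

/-- `a = t(α)`: the unique element of `ℤ[1/p] ∩ (-1/2, 1/2)` with `v_p(α - a) ≥ 0`. -/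
def IsTFloor (p : ℕ) [Fact p.Prime] (α : ℚ_[p]) (a : ℚ) : Prop :=
  InZinvp p a ∧ -(1 / 2 : ℚ) < a ∧ a < (1 / 2 : ℚ) ∧ 0 ≤ vp p (α - (a : ℚ_[p]))

/-- The Browkin floor function `s` (for odd `p` it exists and is unique). -/
noncomputable def sFloor (p : ℕ) [Fact p.Prime] (α : ℚ_[p]) : ℚ :=
  if h : ∃ a : ℚ, IsSFloor p α a then h.choose else 0

/-- The Browkin floor function `t` (for odd `p` it exists and is unique). -/
noncomputable def tFloor (p : ℕ) [Fact p.Prime] (α : ℚ_[p]) : ℚ :=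
  if h : ∃ a : ℚ, IsTFloor p α a then h.choose else 0

/-- The floor used by the MR algorithm at step `n`: `s` for even `n`, `t` for odd `n`. -/
noncomputable def mrFloor (p : ℕ) [Fact p.Prime] (n : ℕ) (x : ℚ_[p]) : ℚ :=
  if Even n then sFloor p x else tFloor p x

/-- The complete quotients `α_n` of the MR algorithm:
`α_0 = α`, `α_{n+1} = 1/(α_n - a_n)` with `a_n = s(α_n)` for even `n`, `t(α_n)` for
odd `n`. -/
noncomputable def mrCQ (p : ℕ) [Fact p.Prime] (α : ℚ_[p]) : ℕ → ℚ_[p]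
  | 0 => α
  | n + 1 => (mrCQ p α n - ((mrFloor p n (mrCQ p α n) : ℚ) : ℚ_[p]))⁻¹

/-- The partial quotients `a_n` of the MR expansion of `α`. -/
noncomputable def mrPQ (p : ℕ) [Fact p.Prime] (α : ℚ_[p]) (n : ℕ) : ℚ :=
  mrFloor p n (mrCQ p α n)

/-- The MR expansion of `α` reaches step `j`: `α_i ≠ a_i` for all `i < j`. -/
def MRReaches (p : ℕ) [Fact p.Prime] (α : ℚ_[p]) (j : ℕ) : Prop :=
  ∀ i, i < j → mrCQ p α i ≠ ((mrPQ p α i : ℚ) : ℚ_[p])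

/-- The MR expansion of `α` is infinite: `α_n ≠ a_n` for all `n`. -/
def MRInfinite (p : ℕ) [Fact p.Prime] (α : ℚ_[p]) : Prop :=
  ∀ n, mrCQ p α n ≠ ((mrPQ p α n : ℚ) : ℚ_[p])

/-! ### Ultrametric geometry of inversion -/

section geometry
variable {p : ℕ} [Fact p.Prime]

lemma one_lt_base (p : ℕ) [hp : Fact p.Prime] : (1 : ℝ) < p := by
  exact_mod_cast hp.out.one_lt

lemma padic_norm_sub_le {x y : ℚ_[p]} {r : ℝ} (hx : ‖x‖ ≤ r) (hy : ‖y‖ ≤ r) : ‖x - y‖ ≤ r := by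
  rw [sub_eq_add_neg]
  exact (IsUltrametricDist.norm_add_le_max _ _).trans (max_le hx (by rwa [norm_neg]))

lemma norm_eq_of_sub_le {x y : ℚ_[p]} {r : ℝ} (h : ‖x - y‖ ≤ r) (hy : r < ‖y‖) : ‖x‖ = ‖y‖ := by
  have := IsUltrametricDist.norm_add_eq_max_of_norm_ne_norm (x := x - y) (y := y)
    (by linarith : ‖x - y‖ < ‖y‖).ne
  rw [sub_add_cancel, max_eq_right (by linarith)] at this
  exact this

lemma mem_closedBall_inv {c a : ℚ_[p]} {k m : ℤ} (hc : ‖c‖ = (p : ℝ) ^ k) (hm : m < k)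
    (h : a⁻¹ ∈ Metric.closedBall c ((p : ℝ) ^ m)) :
    a ∈ Metric.closedBall c⁻¹ ((p : ℝ) ^ (m - 2 * k)) := by
  have hp := one_lt_base p
  rw [mem_closedBall_iff_norm] at h ⊢
  have hlt : (p : ℝ) ^ m < ‖c‖ := hc ▸ zpow_lt_zpow_right₀ hp hm
  have ha : ‖a⁻¹‖ = (p : ℝ) ^ k := (norm_eq_of_sub_le h hlt).trans hc
  have hp0 : (0 : ℝ) < p := by linarith
  have ha0 : a ≠ 0 := by
    rintro rfl
    rw [inv_zero, norm_zero] at ha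
    exact (zpow_pos hp0 k).ne ha
  have hc0 : c ≠ 0 := by
    rintro rfl
    rw [norm_zero] at hc
    exact (zpow_pos hp0 k).ne hc
  have hid : a - c⁻¹ = -((a⁻¹)⁻¹ * (c⁻¹) * (a⁻¹ - c)) := by
    field_simp
    ring
  rw [hid, norm_neg, norm_mul, norm_mul, norm_inv, norm_inv c, ha, hc]
  calc ((p : ℝ) ^ k)⁻¹ * ((p : ℝ) ^ k)⁻¹ * ‖a⁻¹ - c‖
      ≤ ((p : ℝ) ^ k)⁻¹ * ((p : ℝ) ^ k)⁻¹ * (p : ℝ) ^ m := by gcongr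
    _ = (p : ℝ) ^ (m - 2 * k) := by
        rw [← zpow_neg, ← zpow_add₀ hp0.ne', ← zpow_add₀ hp0.ne']
        congr 1; ring

lemma inv_preimage_closedBall {c : ℚ_[p]} {k m : ℤ} (hc : ‖c‖ = (p : ℝ) ^ k) (hm : m < k) :
    (fun a : ℚ_[p] => a⁻¹) ⁻¹' Metric.closedBall c ((p : ℝ) ^ m) =
      Metric.closedBall c⁻¹ ((p : ℝ) ^ (m - 2 * k)) := by
  ext a
  refine ⟨mem_closedBall_inv hc hm, fun h => ?_⟩
  have hc' : ‖c⁻¹‖ = (p : ℝ) ^ (-k) := by rw [norm_inv, hc, zpow_neg]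
  have h' : (a⁻¹)⁻¹ ∈ Metric.closedBall c⁻¹ ((p : ℝ) ^ (m - 2 * k)) := by rwa [inv_inv]
  have := mem_closedBall_inv hc' (by lia) h'
  rw [inv_inv, show m - 2 * k - 2 * -k = m by ring] at this
  exact this

/-- A `p`-adic number of norm at most `p ^ n` is, modulo a ball of radius `p ^ (-N)`, of the form
`m / p ^ n` with an integer `m`. -/
lemma exists_int_near (x : ℚ_[p]) (N : ℕ) (n : ℕ) (hx : ‖x‖ ≤ (p : ℝ) ^ n) :
    ∃ m : ℕ, ‖x - m / (p : ℚ_[p]) ^ n‖ ≤ (p : ℝ) ^ (-(N : ℤ)) := by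
  have hp0 : (0 : ℝ) < p := by linarith [one_lt_base p]
  have hpq : (p : ℚ_[p]) ≠ 0 := by exact_mod_cast (Fact.out : p.Prime).ne_zero
  have hβ : ‖x * (p : ℚ_[p]) ^ n‖ ≤ 1 := by
    rw [norm_mul, norm_pow, Padic.norm_p, inv_pow, ← div_eq_mul_inv]
    exact div_le_one_of_le₀ hx (by positivity)
  let z : ℤ_[p] := ⟨_, hβ⟩
  refine ⟨z.appr (N + n), ?_⟩
  have h1 := ((z - z.appr (N + n)).norm_le_pow_iff_mem_span_pow (N + n)).mpr (z.appr_spec _)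
  have h2 : ‖x * (p : ℚ_[p]) ^ n - (z.appr (N + n) : ℕ)‖ ≤ (p : ℝ) ^ (-((N + n : ℕ) : ℤ)) := by
    have h3 : (((z - z.appr (N + n) : ℤ_[p])) : ℚ_[p]) =
      x * (p : ℚ_[p]) ^ n - (z.appr (N + n) : ℕ) := by push_cast; rfl
    rw [← h3]; exact h1
  have hid : x - (z.appr (N + n) : ℕ) / (p : ℚ_[p]) ^ n =
      (x * (p : ℚ_[p]) ^ n - (z.appr (N + n) : ℕ)) / (p : ℚ_[p]) ^ n := by
    field_simp
  rw [hid, norm_div, norm_pow, Padic.norm_p, inv_pow, div_inv_eq_mul]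
  calc _ ≤ (p : ℝ) ^ (-((N + n : ℕ) : ℤ)) * (p : ℝ) ^ n := by gcongr
    _ = _ := by
      rw [← zpow_natCast, ← zpow_add₀ hp0.ne']
      congr 1; push_cast; ring

end geometry

/-! ### Existence, uniqueness and local constancy of the floors -/

section floors
variable {p : ℕ} [Fact p.Prime]

lemma nat_le_vp_iff (N : ℕ) (x : ℚ_[p]) :
    ((N : ℤ) : WithTop ℤ) ≤ vp p x ↔ ‖x‖ ≤ (p : ℝ) ^ (-(N : ℤ)) := by
  have hp := one_lt_base p
  have hp0 : (0 : ℝ) < p := by linarith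
  unfold vp
  split_ifs with h
  · simp only [h, le_top, norm_zero, true_iff]
    positivity
  · rw [Padic.norm_eq_zpow_neg_valuation h, zpow_le_zpow_iff_right₀ hp, WithTop.coe_le_coe]
    lia

lemma one_le_vp_iff (x : ℚ_[p]) : 1 ≤ vp p x ↔ ‖x‖ ≤ (p : ℝ) ^ (-1 : ℤ) := by
  simpa using nat_le_vp_iff 1 x

lemma zero_le_vp_iff (x : ℚ_[p]) : 0 ≤ vp p x ↔ ‖x‖ ≤ (p : ℝ) ^ (0 : ℤ) := by
  simpa using nat_le_vp_iff 0 x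

/-- The defining property shared by the two floors: `s` is the case `N = 1`, `t` the case
`N = 0`. -/
def IsFloorVal (p : ℕ) [Fact p.Prime] (N : ℕ) (x : ℚ_[p]) (a : ℚ) : Prop :=
  InZinvp p a ∧ -((p : ℚ) ^ N / 2) < a ∧ a < (p : ℚ) ^ N / 2 ∧
    ‖x - (a : ℚ_[p])‖ ≤ (p : ℝ) ^ (-(N : ℤ))

lemma isSFloor_iff (x : ℚ_[p]) (a : ℚ) : IsSFloor p x a ↔ IsFloorVal p 1 x a := by
  unfold IsSFloor IsFloorVal
  rw [one_le_vp_iff, pow_one]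
  rfl

lemma isTFloor_iff (x : ℚ_[p]) (a : ℚ) : IsTFloor p x a ↔ IsFloorVal p 0 x a := by
  unfold IsTFloor IsFloorVal
  rw [zero_le_vp_iff, pow_zero]
  rfl

lemma exists_isFloorVal (hp : Odd p) (N : ℕ) (x : ℚ_[p]) : ∃ a, IsFloorVal p N x a := by
  have hp1 := one_lt_base p
  have hp0 : (0 : ℝ) < p := by linarith
  have hpn : 0 < p := (Fact.out : p.Prime).pos
  have hpQ : (0 : ℚ) < p := by exact_mod_cast hpn
  have hpq : (p : ℚ_[p]) ≠ 0 := by exact_mod_cast (Fact.out : p.Prime).ne_zero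
  obtain ⟨n, hn⟩ := pow_unbounded_of_one_lt ‖x‖ hp1
  obtain ⟨m, hm⟩ := exists_int_near x N n hn.le
  set M : ℕ := p ^ (N + n) with hM
  have hM0 : 0 < M := by positivity
  have hodd : Odd M := hp.pow
  -- `b` is the symmetric residue of `m` modulo `p ^ (N + n)`; its bounds are strict as `p` is odd.
  set b : ℤ := Int.bmod m M with hb
  have hb1 : -(M : ℤ) < 2 * b := by
    have := Int.le_bmod (x := (m : ℤ)) hM0
    obtain ⟨r, hr⟩ := hodd
    lia
  have hb2 : 2 * b < (M : ℤ) := by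
    have := Int.bmod_le (x := (m : ℤ)) hM0
    obtain ⟨r, hr⟩ := hodd
    lia
  have hMQ : ((M : ℤ) : ℚ) = (p : ℚ) ^ N * (p : ℚ) ^ n := by
    rw [hM]; push_cast; rw [pow_add]
  have hpos : (0 : ℚ) < (p : ℚ) ^ n := by positivity
  refine ⟨b / (p : ℚ) ^ n, ⟨n, b, by field_simp⟩, ?_, ?_, ?_⟩
  · have : -((M : ℤ) : ℚ) < 2 * (b : ℚ) := by exact_mod_cast hb1
    rw [hMQ] at this
    rw [lt_div_iff₀ hpos]
    linarith
  · have : 2 * (b : ℚ) < ((M : ℤ) : ℚ) := by exact_mod_cast hb2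
    rw [hMQ] at this
    rw [div_lt_iff₀ hpos]
    linarith
  · have hid : x - ((b / (p : ℚ) ^ n : ℚ) : ℚ_[p]) =
        (x - m / (p : ℚ_[p]) ^ n) + (((m : ℤ) - b : ℤ) : ℚ_[p]) / (p : ℚ_[p]) ^ n := by
      push_cast
      field_simp
      ring
    rw [hid]
    refine (IsUltrametricDist.norm_add_le_max _ _).trans (max_le hm ?_)
    have hd : ‖(((m : ℤ) - b : ℤ) : ℚ_[p])‖ ≤ (p : ℝ) ^ (-((N + n : ℕ) : ℤ)) := by
      rw [Padic.norm_int_le_pow_iff_dvd]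
      have := Int.dvd_self_sub_bmod (x := (m : ℤ)) (m := M)
      rw [hM] at this
      exact_mod_cast this
    rw [norm_div, norm_pow, Padic.norm_p, inv_pow, div_inv_eq_mul]
    calc _ ≤ (p : ℝ) ^ (-((N + n : ℕ) : ℤ)) * (p : ℝ) ^ n := by gcongr
      _ = _ := by
        rw [← zpow_natCast, ← zpow_add₀ hp0.ne']
        congr 1; push_cast; ring

lemma isFloorVal_unique {N : ℕ} {x : ℚ_[p]} {a b : ℚ} (ha : IsFloorVal p N x a)
    (hb : IsFloorVal p N x b) : a = b := by
  have hp1 := one_lt_base p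
  have hp0 : (0 : ℝ) < p := by linarith
  have hpn : 0 < p := (Fact.out : p.Prime).pos
  have hpQ : (0 : ℚ) < p := by exact_mod_cast hpn
  obtain ⟨⟨n₁, m₁, h₁⟩, ha1, ha2, ha3⟩ := ha
  obtain ⟨⟨n₂, m₂, h₂⟩, hb1, hb2, hb3⟩ := hb
  -- The difference `d / p ^ (n₁ + n₂)` is small both really and `p`-adically.
  set d : ℤ := m₁ * p ^ n₂ - m₂ * p ^ n₁ with hd
  have hdq : (d : ℚ) = (a - b) * (p : ℚ) ^ (n₁ + n₂) := by
    rw [hd]; push_cast; rw [← h₁, ← h₂, pow_add]; ring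
  have hnorm : ‖(a : ℚ_[p]) - b‖ ≤ (p : ℝ) ^ (-(N : ℤ)) := by
    have : (a : ℚ_[p]) - b = (x - b) - (x - a) := by ring
    rw [this]
    exact padic_norm_sub_le hb3 ha3
  have hdn : ‖(d : ℚ_[p])‖ ≤ (p : ℝ) ^ (-((N + (n₁ + n₂) : ℕ) : ℤ)) := by
    have : (d : ℚ_[p]) = ((a : ℚ_[p]) - b) * (p : ℚ_[p]) ^ (n₁ + n₂) := by exact_mod_cast hdq
    rw [this, norm_mul, norm_pow, Padic.norm_p]
    calc _ ≤ (p : ℝ) ^ (-(N : ℤ)) * (p : ℝ)⁻¹ ^ (n₁ + n₂) := by gcongr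
      _ = _ := by
        rw [inv_pow, ← zpow_natCast, ← zpow_neg, ← zpow_add₀ hp0.ne']
        congr 1; push_cast; ring
  rw [Padic.norm_int_le_pow_iff_dvd] at hdn
  have hd0 : d = 0 := by
    refine Int.eq_zero_of_abs_lt_dvd hdn ?_
    have hab : |a - b| < (p : ℚ) ^ N := abs_lt.2 ⟨by linarith, by linarith⟩
    have : |(d : ℚ)| < (p : ℚ) ^ (N + (n₁ + n₂)) := by
      rw [hdq, abs_mul, abs_of_pos (by positivity : (0 : ℚ) < (p : ℚ) ^ (n₁ + n₂)), pow_add _ N]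
      gcongr
    exact_mod_cast this
  rw [hd0, Int.cast_zero, eq_comm, mul_eq_zero] at hdq
  rcases hdq with h | h
  · linarith
  · exact absurd h (by positivity)

/-- The properties of a floor map used in the measure computations: subtracting it moves each point
into the ball of radius `p ^ e` about `0`, and it is constant on the cosets of that ball. -/
structure IsFloorMap (fl : ℚ_[p] → ℚ) (e : ℤ) : Prop where
  near : ∀ x, ‖x - (fl x : ℚ_[p])‖ ≤ (p : ℝ) ^ e
  const : ∀ x x', ‖x - x'‖ ≤ (p : ℝ) ^ e → fl x = fl x'

lemma isFloorMap_of_spec {fl : ℚ_[p] → ℚ} {N : ℕ} (h : ∀ x, IsFloorVal p N x (fl x)) :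
    IsFloorMap fl (-(N : ℤ)) where
  near x := (h x).2.2.2
  const x x' hx := by
    refine isFloorVal_unique (N := N) (x := x') ⟨(h x).1, (h x).2.1, (h x).2.2.1, ?_⟩ (h x')
    have : x' - (fl x : ℚ_[p]) = (x - fl x) - (x - x') := by ring
    rw [this]
    exact padic_norm_sub_le (h x).2.2.2 hx

lemma sFloor_spec (hp : Odd p) (x : ℚ_[p]) : IsFloorVal p 1 x (sFloor p x) := by
  have h : ∃ a, IsSFloor p x a := by simpa only [isSFloor_iff] using exists_isFloorVal hp 1 x
  rw [sFloor, dif_pos h, ← isSFloor_iff]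
  exact h.choose_spec

lemma tFloor_spec (hp : Odd p) (x : ℚ_[p]) : IsFloorVal p 0 x (tFloor p x) := by
  have h : ∃ a, IsTFloor p x a := by simpa only [isTFloor_iff] using exists_isFloorVal hp 0 x
  rw [tFloor, dif_pos h, ← isTFloor_iff]
  exact h.choose_spec

lemma isFloorMap_sFloor (hp : Odd p) : IsFloorMap (sFloor p) (-1) := by
  simpa using isFloorMap_of_spec (sFloor_spec hp)

lemma isFloorMap_tFloor (hp : Odd p) : IsFloorMap (tFloor p) 0 := by
  simpa using isFloorMap_of_spec (tFloor_spec hp)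

lemma isFloorVal_zero (N : ℕ) {x : ℚ_[p]} (hx : ‖x‖ ≤ (p : ℝ) ^ (-(N : ℤ))) :
    IsFloorVal p N x 0 := by
  have hpQ : (0 : ℚ) < p := by exact_mod_cast (Fact.out : p.Prime).pos
  have : (0 : ℚ) < (p : ℚ) ^ N := by positivity
  exact ⟨⟨0, 0, by simp⟩, by linarith, by linarith, by simpa using hx⟩

lemma sFloor_eq_zero (hp : Odd p) {x : ℚ_[p]} (hx : ‖x‖ ≤ (p : ℝ) ^ (-1 : ℤ)) :
    sFloor p x = 0 :=
  isFloorVal_unique (sFloor_spec hp x) (isFloorVal_zero 1 (by simpa using hx))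

end floors

/-! ### Haar measure of balls and its behavior under inversion -/

section balls
variable {p : ℕ} [Fact p.Prime]

lemma norm_p_zpow' (m : ℤ) : ‖(p : ℚ_[p]) ^ (-m)‖ = (p : ℝ) ^ m := by simp

lemma closedBall_succ_eq (m : ℤ) :
    Metric.closedBall (0 : ℚ_[p]) ((p : ℝ) ^ (m + 1)) =
      ⋃ i : Fin p, Metric.closedBall ((i : ℕ) * (p : ℚ_[p]) ^ (-(m + 1))) ((p : ℝ) ^ m) := by
  have hp1 := one_lt_base p
  have hp0 : (0 : ℝ) < p := by linarith
  have hpq : (p : ℚ_[p]) ≠ 0 := by exact_mod_cast (Fact.out : p.Prime).ne_zero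
  ext x
  rw [mem_closedBall_zero_iff]
  simp only [Set.mem_iUnion, mem_closedBall_iff_norm]
  constructor
  · intro hx
    have hβ : ‖x * (p : ℚ_[p]) ^ (m + 1)‖ ≤ 1 := by
      rw [norm_mul, Padic.norm_p_zpow, zpow_neg, ← div_eq_mul_inv]
      exact div_le_one_of_le₀ hx (by positivity)
    let z : ℤ_[p] := ⟨_, hβ⟩
    obtain ⟨n, hn, hz⟩ := z.exists_mem_range
    refine ⟨⟨n, hn⟩, ?_⟩
    rw [IsLocalRing.mem_maximalIdeal, PadicInt.mem_nonunits] at hz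
    have h2 : ‖x * (p : ℚ_[p]) ^ (m + 1) - n‖ < (p : ℝ) ^ (-1 + 1 : ℤ) := by
      have h3 : ((z - n : ℤ_[p]) : ℚ_[p]) = x * (p : ℚ_[p]) ^ (m + 1) - n := by push_cast; rfl
      rw [← h3, neg_add_cancel, zpow_zero]; exact hz
    rw [← Padic.norm_le_pow_iff_norm_lt_pow_add_one] at h2
    have hid : x - n * (p : ℚ_[p]) ^ (-(m + 1)) =
        (x * (p : ℚ_[p]) ^ (m + 1) - n) * (p : ℚ_[p]) ^ (-(m + 1)) := by
      rw [sub_mul, mul_assoc, ← zpow_add₀ hpq]; simp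
    change ‖x - n * (p : ℚ_[p]) ^ (-(m + 1))‖ ≤ _
    rw [hid, norm_mul, norm_p_zpow']
    calc _ ≤ (p : ℝ) ^ (-1 : ℤ) * (p : ℝ) ^ (m + 1) := by gcongr
      _ = _ := by rw [← zpow_add₀ hp0.ne']; congr 1; ring
  · rintro ⟨i, hi⟩
    have hid : x = (x - (i : ℕ) * (p : ℚ_[p]) ^ (-(m + 1))) -
      (-((i : ℕ) * (p : ℚ_[p]) ^ (-(m + 1)))) := by ring
    rw [hid]
    refine padic_norm_sub_le (hi.trans (zpow_le_zpow_right₀ hp1.le (by lia : m ≤ m + 1))) ?_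
    rw [norm_neg, norm_mul, norm_p_zpow']
    have : ‖((i : ℕ) : ℚ_[p])‖ ≤ 1 := by simpa using Padic.norm_int_le_one (p := p) (i : ℕ)
    exact mul_le_of_le_one_left (by positivity) this

/-- The balls of radius a power of `p`, a `π`-system generating the Borel sets. -/
def padicBalls (p : ℕ) [Fact p.Prime] : Set (Set ℚ_[p]) :=
  {S | ∃ (c : ℚ_[p]) (m : ℤ), S = Metric.closedBall c ((p : ℝ) ^ m)}

lemma padicBalls_inter {c d : ℚ_[p]} {m n : ℤ}
    (h : (Metric.closedBall c ((p : ℝ) ^ m) ∩ Metric.closedBall d ((p : ℝ) ^ n)).Nonempty) :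
    ∃ x ∈ Metric.closedBall d ((p : ℝ) ^ n), ∃ l ≤ n,
      Metric.closedBall c ((p : ℝ) ^ m) ∩ Metric.closedBall d ((p : ℝ) ^ n) =
        Metric.closedBall x ((p : ℝ) ^ l) := by
  have hp1 := one_lt_base p
  obtain ⟨x, hx1, hx2⟩ := h
  refine ⟨x, hx2, min m n, min_le_right _ _, ?_⟩
  rw [IsUltrametricDist.closedBall_eq_of_mem hx1, IsUltrametricDist.closedBall_eq_of_mem hx2]
  rcases le_total m n with hmn | hmn
  · rw [min_eq_left hmn, Set.inter_eq_left]
    exact Metric.closedBall_subset_closedBall (zpow_le_zpow_right₀ hp1.le hmn)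
  · rw [min_eq_right hmn, Set.inter_eq_right]
    exact Metric.closedBall_subset_closedBall (zpow_le_zpow_right₀ hp1.le hmn)

lemma isPiSystem_padicBalls : IsPiSystem (padicBalls p) := by
  rintro _ ⟨c, m, rfl⟩ _ ⟨d, n, rfl⟩ h
  obtain ⟨x, -, l, -, hx⟩ := padicBalls_inter h
  exact ⟨x, l, hx⟩

end balls

section measure
variable {p : ℕ} [Fact p.Prime] [MeasurableSpace ℚ_[p]] [BorelSpace ℚ_[p]]

lemma measure_closedBall_center (μ : Measure ℚ_[p]) [μ.IsAddHaarMeasure] (c : ℚ_[p]) (r : ℝ) :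
    μ (Metric.closedBall c r) = μ (Metric.closedBall 0 r) := by
  rw [← measure_preimage_add μ c (Metric.closedBall c r)]
  congr 1
  ext x
  simp [dist_eq_norm]

lemma measure_closedBall_succ (μ : Measure ℚ_[p]) [μ.IsAddHaarMeasure] (m : ℤ) :
    μ (Metric.closedBall 0 ((p : ℝ) ^ (m + 1))) = p * μ (Metric.closedBall 0 ((p : ℝ) ^ m)) := by
  have hp1 := one_lt_base p
  have hp0 : (0 : ℝ) < p := by linarith
  rw [closedBall_succ_eq, measure_iUnion]
  · simp_rw [measure_closedBall_center μ _ ((p : ℝ) ^ m)]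
    simp
  · intro i j hij
    refine (IsUltrametricDist.closedBall_eq_or_disjoint _ _ _).resolve_left fun h => hij ?_
    have hmem : ((i : ℕ) * (p : ℚ_[p]) ^ (-(m + 1))) ∈
        Metric.closedBall ((j : ℕ) * (p : ℚ_[p]) ^ (-(m + 1))) ((p : ℝ) ^ m) := by
      rw [← h]; exact Metric.mem_closedBall_self (by positivity)
    rw [mem_closedBall_iff_norm, ← sub_mul, norm_mul, norm_p_zpow'] at hmem
    have h1 : ‖((((i : ℕ) : ℤ) - ((j : ℕ) : ℤ) : ℤ) : ℚ_[p])‖ ≤ (p : ℝ) ^ (-((1 : ℕ) : ℤ)) := by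
      have h2 : (p : ℝ) ^ m = (p : ℝ) ^ (-((1 : ℕ) : ℤ)) * (p : ℝ) ^ (m + 1) := by
        rw [← zpow_add₀ hp0.ne']; congr 1; push_cast; ring
      rw [h2] at hmem
      push_cast at hmem ⊢
      exact le_of_mul_le_mul_right hmem (by positivity)
    rw [Padic.norm_int_le_pow_iff_dvd, pow_one] at h1
    have h3 : ((i : ℕ) : ℤ) - ((j : ℕ) : ℤ) = 0 := by
      refine Int.eq_zero_of_abs_lt_dvd h1 ?_
      have h4 : ((i : ℕ) : ℤ) < p := by exact_mod_cast i.2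
      have h5 : ((j : ℕ) : ℤ) < p := by exact_mod_cast j.2
      rw [abs_lt]
      constructor <;> linarith [Int.natCast_nonneg (i : ℕ), Int.natCast_nonneg (j : ℕ)]
    apply Fin.ext
    lia
  · exact fun i => measurableSet_closedBall

lemma measure_closedBall (μ : Measure ℚ_[p]) [μ.IsAddHaarMeasure]
    (hμ : μ (Metric.closedBall 0 ((p : ℝ) ^ (-1 : ℤ))) = 1) (c : ℚ_[p]) (m : ℤ) :
    μ (Metric.closedBall c ((p : ℝ) ^ m)) = ENNReal.ofReal ((p : ℝ) ^ (m + 1)) := by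
  have hp0 : (0 : ℝ) < p := by linarith [one_lt_base p]
  have hcast : (p : ENNReal) = ENNReal.ofReal p := by simp
  rw [measure_closedBall_center]
  suffices h : ∀ n : ℤ, μ (Metric.closedBall 0 ((p : ℝ) ^ (n - 1))) =
      ENNReal.ofReal ((p : ℝ) ^ n) by simpa using h (m + 1)
  have step (n : ℤ) : ENNReal.ofReal ((p : ℝ) ^ (n + 1)) = p * ENNReal.ofReal ((p : ℝ) ^ n) := by
    rw [hcast, ← ENNReal.ofReal_mul hp0.le, zpow_add_one₀ hp0.ne', mul_comm]
  intro n
  induction n using Int.induction_on with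
  | zero => simpa using hμ
  | succ n ih =>
    rw [step, ← ih, ← measure_closedBall_succ]
    congr 3; ring
  | pred n ih =>
    have h1 := measure_closedBall_succ μ (-(n : ℤ) - 1 - 1)
    have h2 := step (-(n : ℤ) - 1)
    rw [sub_add_cancel] at h1 h2
    rw [ih, h2] at h1
    exact ((ENNReal.mul_right_inj (by simp [(Fact.out : p.Prime).ne_zero]) (by simp)).1 h1).symm

lemma generateFrom_padicBalls :
    (inferInstance : MeasurableSpace ℚ_[p]) = MeasurableSpace.generateFrom (padicBalls p) := by
  have hp1 := one_lt_base p
  have hp0 : (0 : ℝ) < p := by linarith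
  have hb : TopologicalSpace.IsTopologicalBasis (padicBalls p) := by
    refine TopologicalSpace.isTopologicalBasis_of_isOpen_of_nhds ?_ ?_
    · rintro _ ⟨c, m, rfl⟩
      exact IsUltrametricDist.isOpen_closedBall _ (zpow_pos hp0 m).ne'
    · intro a u ha hu
      obtain ⟨ε, hε, hεu⟩ := Metric.isOpen_iff.1 hu a ha
      obtain ⟨n, hn⟩ := exists_pow_lt_of_lt_one hε (inv_lt_one_of_one_lt₀ hp1)
      refine ⟨_, ⟨a, -(n : ℤ), rfl⟩, Metric.mem_closedBall_self (by positivity),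
        (Metric.closedBall_subset_ball ?_).trans hεu⟩
      rwa [zpow_neg, zpow_natCast, ← inv_pow]
  rw [← hb.borel_eq_generateFrom]
  exact BorelSpace.measurable_eq

/-- Inversion multiplies lengths on a ball avoiding `0` by the constant `‖y‖⁻²`, so it multiplies
Haar measure by the same constant. -/
lemma measure_inv_preimage (μ : Measure ℚ_[p]) [μ.IsAddHaarMeasure]
    (hμ : μ (Metric.closedBall 0 ((p : ℝ) ^ (-1 : ℤ))) = 1)
    {y : ℚ_[p]} {k e : ℤ} (hy : ‖y‖ = (p : ℝ) ^ k) (he : e < k) {B : Set ℚ_[p]}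
    (hB : MeasurableSet B) (hBy : B ⊆ Metric.closedBall y ((p : ℝ) ^ e)) :
    μ ((fun a => a⁻¹) ⁻¹' B) = ENNReal.ofReal ((p : ℝ) ^ (-2 * k)) * μ B := by
  have hp1 := one_lt_base p
  have hp0 : (0 : ℝ) < p := by linarith
  have hinv : Measurable (fun a : ℚ_[p] => a⁻¹) := measurable_inv
  set D := Metric.closedBall y ((p : ℝ) ^ e) with hD
  have hball : ∀ c ∈ D, ∀ l ≤ e, μ ((fun a => a⁻¹) ⁻¹' Metric.closedBall c ((p : ℝ) ^ l)) =
      ENNReal.ofReal ((p : ℝ) ^ (-2 * k)) * μ (Metric.closedBall c ((p : ℝ) ^ l)) := by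
    intro c hc l hl
    have hck : ‖c‖ = (p : ℝ) ^ k := by
      rw [← hy]
      rw [hD, mem_closedBall_iff_norm] at hc
      exact norm_eq_of_sub_le hc (hy ▸ zpow_lt_zpow_right₀ hp1 he)
    rw [inv_preimage_closedBall hck (by lia), measure_closedBall μ hμ, measure_closedBall μ hμ,
      ← ENNReal.ofReal_mul (by positivity), ← zpow_add₀ hp0.ne']
    congr 2; ring
  have hyD : y ∈ D := Metric.mem_closedBall_self (by positivity)
  have hDm : MeasurableSet D := measurableSet_closedBall
  have : IsFiniteMeasure ((μ.restrict ((fun a => a⁻¹) ⁻¹' D)).map (fun a => a⁻¹)) := by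
    refine ⟨?_⟩
    rw [Measure.map_apply hinv MeasurableSet.univ, Set.preimage_univ,
      Measure.restrict_apply_univ, hball y hyD e le_rfl, measure_closedBall μ hμ]
    exact ENNReal.mul_lt_top ENNReal.ofReal_lt_top ENNReal.ofReal_lt_top
  have key : (μ.restrict ((fun a => a⁻¹) ⁻¹' D)).map (fun a => a⁻¹) =
      ENNReal.ofReal ((p : ℝ) ^ (-2 * k)) • μ.restrict D := by
    refine ext_of_generate_finite _ generateFrom_padicBalls isPiSystem_padicBalls ?_ ?_
    · rintro _ ⟨c, m, rfl⟩
      rw [Measure.map_apply hinv measurableSet_closedBall,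
        Measure.restrict_apply (hinv measurableSet_closedBall), ← Set.preimage_inter,
        Measure.smul_apply, Measure.restrict_apply measurableSet_closedBall, smul_eq_mul]
      rcases Set.eq_empty_or_nonempty (Metric.closedBall c ((p : ℝ) ^ m) ∩ D) with h | h
      · rw [h]; simp
      · obtain ⟨x, hx, l, hl, hxl⟩ := padicBalls_inter h
        rw [hxl]
        exact hball x hx l hl
    · rw [Measure.map_apply hinv MeasurableSet.univ, Set.preimage_univ,
        Measure.restrict_apply_univ, Measure.smul_apply, Measure.restrict_apply_univ, smul_eq_mul]
      exact hball y hyD e le_rfl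
  have h := congrArg (fun ν => ν B) key
  simp only [Measure.smul_apply, smul_eq_mul] at h
  rwa [Measure.map_apply hinv hB, Measure.restrict_apply (hinv hB), Measure.restrict_apply hB,
    ← Set.preimage_inter, Set.inter_eq_left.2 hBy] at h

end measure

/-! ### Half steps of the algorithm -/

section halfStep
variable {p : ℕ} [Fact p.Prime]

/-- One step of the continued fraction algorithm with floor `fl`, seen on the remainders
`α_n - a_n`: invert, then subtract the floor. -/
noncomputable def halfStep (fl : ℚ_[p] → ℚ) (x : ℚ_[p]) : ℚ_[p] := x⁻¹ - (fl x⁻¹ : ℚ_[p])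

variable {fl : ℚ_[p] → ℚ} {e : ℤ}

lemma IsFloorMap.idem (h : IsFloorMap fl e) (x : ℚ_[p]) : fl (fl x : ℚ_[p]) = fl x :=
  (h.const _ _ (h.near x)).symm

lemma IsFloorMap.norm_lt_iff (h : IsFloorMap fl e) (x : ℚ_[p]) :
    (p : ℝ) ^ e < ‖(fl x : ℚ_[p])‖ ↔ (p : ℝ) ^ e < ‖x‖ := by
  have h1 := h.near x
  constructor
  · intro hlt
    rwa [norm_eq_of_sub_le h1 hlt]
  · intro hlt
    rw [norm_sub_rev] at h1
    rwa [norm_eq_of_sub_le h1 hlt]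

lemma halfStep_mem (h : IsFloorMap fl e) (x : ℚ_[p]) :
    halfStep fl x ∈ Metric.closedBall (0 : ℚ_[p]) ((p : ℝ) ^ e) := by
  rw [mem_closedBall_zero_iff]
  exact h.near _

lemma lt_norm_inv_iff (e : ℤ) (x : ℚ_[p]) :
    (p : ℝ) ^ e < ‖x⁻¹‖ ↔ x ∈ Metric.closedBall (0 : ℚ_[p]) ((p : ℝ) ^ (-e - 1)) ∧ x ≠ 0 := by
  have hp0 : (0 : ℝ) < p := by linarith [one_lt_base p]
  by_cases hx : x = 0
  · simp [hx, (zpow_pos hp0 e).le]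
  · have : 0 < ‖x‖ := norm_pos_iff.2 hx
    rw [mem_closedBall_zero_iff, Padic.norm_le_pow_iff_norm_lt_pow_add_one, sub_add_cancel,
      norm_inv, lt_inv_comm₀ (by positivity) this, zpow_neg]
    simp [hx]

variable [MeasurableSpace ℚ_[p]] [BorelSpace ℚ_[p]]

lemma IsFloorMap.measurable_cast (h : IsFloorMap fl e) :
    Measurable fun x => (fl x : ℚ_[p]) := by
  have hp0 : (0 : ℝ) < p := by linarith [one_lt_base p]
  refine Continuous.measurable (IsLocallyConstant.continuous ?_)
  rw [IsLocallyConstant.iff_eventually_eq]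
  intro x
  filter_upwards [Metric.closedBall_mem_nhds x (zpow_pos hp0 e)] with x' hx'
  rw [mem_closedBall_iff_norm] at hx'
  rw [h.const _ _ hx']

lemma IsFloorMap.measurableSet_eq (h : IsFloorMap fl e) (q : ℚ) :
    MeasurableSet {x : ℚ_[p] | fl x⁻¹ = q} := by
  have h1 : MeasurableSet ((fun x : ℚ_[p] => (fl x⁻¹ : ℚ_[p])) ⁻¹' {(q : ℚ_[p])}) :=
    (h.measurable_cast.comp measurable_inv) (measurableSet_singleton _)
  convert! h1 using 1
  ext x
  simp

lemma measurable_halfStep (h : IsFloorMap fl e) : Measurable (halfStep fl) :=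
  measurable_inv.sub (h.measurable_cast.comp measurable_inv)

/-- Each branch `fl α⁻¹ = y` of a half step maps onto the whole ball of radius `p ^ e` and scales
Haar measure by the constant `‖y‖²`. -/
lemma measure_branch (μ : Measure ℚ_[p]) [μ.IsAddHaarMeasure]
    (hμ : μ (Metric.closedBall 0 ((p : ℝ) ^ (-1 : ℤ))) = 1) (h : IsFloorMap fl e)
    {y : ℚ} {k : ℤ} (hfl : fl (y : ℚ_[p]) = y) (hy : ‖(y : ℚ_[p])‖ = (p : ℝ) ^ k) (he : e < k)
    {B : Set ℚ_[p]} (hB : MeasurableSet B) (hBs : B ⊆ Metric.closedBall 0 ((p : ℝ) ^ e)) :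
    μ {x | fl x⁻¹ = y ∧ halfStep fl x ∈ B} = ENNReal.ofReal ((p : ℝ) ^ (-2 * k)) * μ B := by
  set B' : Set ℚ_[p] := (fun x => x + (-(y : ℚ_[p]))) ⁻¹' B with hB'
  have hset : {x | fl x⁻¹ = y ∧ halfStep fl x ∈ B} = (fun a => a⁻¹) ⁻¹' B' := by
    ext x
    simp only [Set.mem_ofPred_eq, Set.mem_preimage, hB', ← sub_eq_add_neg, halfStep]
    constructor
    · rintro ⟨h1, h2⟩
      rwa [h1] at h2
    · intro h1
      have h2 : fl x⁻¹ = y := by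
        have := hBs h1
        rw [mem_closedBall_zero_iff] at this
        rw [h.const _ _ this, hfl]
      exact ⟨h2, by rwa [h2]⟩
  rw [hset, measure_inv_preimage μ hμ hy he (hB.preimage (measurable_add_const _)),
    measure_preimage_add_right]
  intro x hx
  have := hBs hx
  rw [mem_closedBall_zero_iff] at this
  rw [mem_closedBall_iff_norm, sub_eq_add_neg]
  exact this

/-- Summing over the branches, the pushforward of Haar measure under a half step is a multiple of
Haar measure. -/
lemma exists_measure_halfStep (μ : Measure ℚ_[p]) [μ.IsAddHaarMeasure]
    (hμ : μ (Metric.closedBall 0 ((p : ℝ) ^ (-1 : ℤ))) = 1) (h : IsFloorMap fl e) :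
    ∃ c : ENNReal, ∀ B : Set ℚ_[p], MeasurableSet B → B ⊆ Metric.closedBall 0 ((p : ℝ) ^ e) →
      μ {x | (p : ℝ) ^ e < ‖x⁻¹‖ ∧ halfStep fl x ∈ B} = c * μ B := by
  have hp1 := one_lt_base p
  have hq : ∀ q : ℚ, ∃ c : ENNReal, ∀ B : Set ℚ_[p], MeasurableSet B →
      B ⊆ Metric.closedBall 0 ((p : ℝ) ^ e) →
      μ {x | (p : ℝ) ^ e < ‖x⁻¹‖ ∧ fl x⁻¹ = q ∧ halfStep fl x ∈ B} = c * μ B := by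
    intro q
    by_cases hc : fl (q : ℚ_[p]) = q ∧ (p : ℝ) ^ e < ‖(q : ℚ_[p])‖
    · have hq0 : (q : ℚ_[p]) ≠ 0 := by
        rintro h0
        rw [h0, norm_zero] at hc
        exact absurd hc.2 (not_lt.2 (by positivity))
      have hqn := Padic.norm_eq_zpow_neg_valuation hq0
      have hlt : e < -(q : ℚ_[p]).valuation := by
        have := hc.2
        rwa [hqn, zpow_lt_zpow_iff_right₀ hp1] at this
      refine ⟨ENNReal.ofReal ((p : ℝ) ^ (-2 * -(q : ℚ_[p]).valuation)), fun B hB hBs => ?_⟩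
      rw [← measure_branch μ hμ h hc.1 hqn hlt hB hBs]
      congr 1
      ext x
      simp only [Set.mem_ofPred_eq, and_iff_right_iff_imp]
      rintro ⟨h1, -⟩
      rw [← h.norm_lt_iff, h1]
      exact hc.2
    · refine ⟨0, fun B hB hBs => ?_⟩
      rw [zero_mul]
      convert measure_empty (μ := μ)
      rw [Set.eq_empty_iff_forall_notMem]
      rintro x ⟨h1, h2, -⟩
      refine hc ⟨?_, ?_⟩
      · rw [← h2, h.idem]
      · rwa [← h2, h.norm_lt_iff]
  choose c hc using hq
  refine ⟨∑' q, c q, fun B hB hBs => ?_⟩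
  rw [← ENNReal.tsum_mul_right]
  simp_rw [← fun q => hc q B hB hBs]
  rw [← measure_iUnion]
  · congr 1
    ext x
    simp
  · intro q r hqr
    rw [Function.onFun, Set.disjoint_left]
    rintro x ⟨-, h1, -⟩ ⟨-, h2, -⟩
    exact hqr (h1.symm.trans h2)
  · intro q
    have h1 : MeasurableSet {x : ℚ_[p] | (p : ℝ) ^ e < ‖x⁻¹‖} :=
      measurableSet_lt measurable_const measurable_inv.norm
    exact h1.inter ((h.measurableSet_eq q).inter (measurable_halfStep h hB))

/-- A half step carries normalized Haar measure on the ball of radius `p ^ (-e - 1)` to normalized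
Haar measure on the ball of radius `p ^ e`. The constant of proportionality is found by evaluating
on the full ball. -/
lemma measure_halfStep (μ : Measure ℚ_[p]) [μ.IsAddHaarMeasure]
    (hμ : μ (Metric.closedBall 0 ((p : ℝ) ^ (-1 : ℤ))) = 1) (h : IsFloorMap fl e)
    {B : Set ℚ_[p]} (hB : MeasurableSet B) :
    μ (halfStep fl ⁻¹' B ∩ Metric.closedBall 0 ((p : ℝ) ^ (-e - 1))) *
        μ (Metric.closedBall 0 ((p : ℝ) ^ e)) =
      μ (Metric.closedBall 0 ((p : ℝ) ^ (-e - 1))) *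
        μ (B ∩ Metric.closedBall 0 ((p : ℝ) ^ e)) := by
  obtain ⟨c, hc⟩ := exists_measure_halfStep μ hμ h
  have key : ∀ B : Set ℚ_[p], MeasurableSet B →
      μ (halfStep fl ⁻¹' B ∩ Metric.closedBall 0 ((p : ℝ) ^ (-e - 1))) =
        c * μ (B ∩ Metric.closedBall 0 ((p : ℝ) ^ e)) := by
    intro B hB
    rw [← hc _ (hB.inter measurableSet_closedBall) Set.inter_subset_right,
      ← measure_sdiff_null (measure_singleton (0 : ℚ_[p]))]
    congr 1
    ext x
    have := halfStep_mem h x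
    simp only [Set.mem_sdiff, Set.mem_inter_iff, Set.mem_preimage, Set.mem_singleton_iff,
      Set.mem_ofPred_eq, lt_norm_inv_iff]
    tauto
  have h1 := key Set.univ MeasurableSet.univ
  rw [Set.preimage_univ, Set.univ_inter, Set.univ_inter] at h1
  rw [key B hB, h1]
  ring

end halfStep

/-! ### Frequencies of independent events -/

section probability
variable {Ω : Type*} [MeasurableSpace Ω]

/-- If the event `A` is independent of the whole future of a measure-preserving map `T`, then the
visits of almost every orbit to `A` have asymptotic frequency `P A`: the visit indicators are
pairwise independent and identically distributed, so the strong law of large numbers applies. -/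
lemma frequency_of_indep (P : Measure Ω) [IsProbabilityMeasure P] {T : Ω → Ω}
    (hT : MeasurePreserving T P P) {A : Set Ω} (hA : MeasurableSet A)
    (hind : ∀ B, MeasurableSet B → P (A ∩ T ⁻¹' B) = P A * P B) :
    ∀ᵐ ω ∂P, Filter.Tendsto
      (fun N : ℕ => (((Finset.range N).filter (fun i => T^[i] ω ∈ A)).card : ℝ) / N)
      Filter.atTop (nhds (P.real A)) := by
  set S : ℕ → Set Ω := fun i => T^[i] ⁻¹' A with hS
  have hSm : ∀ i, MeasurableSet (S i) := fun i => (hT.iterate i).measurable hA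
  have hSP : ∀ i, P (S i) = P A := fun i => (hT.iterate i).measure_preimage hA.nullMeasurableSet
  have hlt : ∀ i j, i < j → P (S i ∩ S j) = P (S i) * P (S j) := by
    intro i j hij
    obtain ⟨d, rfl⟩ : ∃ d, j = d + 1 + i := ⟨j - i - 1, by lia⟩
    have h1 : S i ∩ S (d + 1 + i) = T^[i] ⁻¹' (A ∩ T ⁻¹' S d) := by
      ext ω
      simp only [hS, Set.mem_inter_iff, Set.mem_preimage, Function.iterate_add_apply,
        Function.iterate_one]
    rw [h1, (hT.iterate i).measure_preimage
      (hA.inter (hT.measurable (hSm d))).nullMeasurableSet, hind _ (hSm d), hSP, hSP, hSP]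
  have hne : ∀ i j, i ≠ j → ProbabilityTheory.IndepSet (S i) (S j) P := by
    intro i j hij
    rw [ProbabilityTheory.indepSet_iff_measure_inter_eq_mul (hSm i) (hSm j) P]
    rcases lt_or_gt_of_ne hij with h | h
    · exact hlt i j h
    · rw [Set.inter_comm, mul_comm]
      exact hlt j i h
  have hcomap : ∀ i, MeasurableSpace.comap ((S i).indicator (fun _ => (1 : ℝ))) inferInstance ≤
      MeasurableSpace.generateFrom {S i} := by
    intro i
    have h1 : Measurable[MeasurableSpace.generateFrom {S i}] fun _ : Ω => (1 : ℝ) :=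
      measurable_const
    exact (h1.indicator
      (MeasurableSpace.measurableSet_generateFrom (Set.mem_singleton _))).comap_le
  have hX0 : S 0 = A := rfl
  have hmeas : ∀ i, Measurable ((S i).indicator (fun _ => (1 : ℝ))) :=
    fun i => measurable_const.indicator (hSm i)
  have hslln := ProbabilityTheory.strong_law_ae_real (μ := P)
    (fun i => (S i).indicator (fun _ => (1 : ℝ)))
    ((integrable_const (1 : ℝ)).indicator (hSm 0))
    (fun i j hij => ProbabilityTheory.indep_of_indep_of_le_left
      (ProbabilityTheory.indep_of_indep_of_le_right (hne i j hij) (hcomap j)) (hcomap i))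
    (fun i => ⟨(hmeas i).aemeasurable, (hmeas 0).aemeasurable, by
      have h1 : (S i).indicator (fun _ => (1 : ℝ)) =
        (S 0).indicator (fun _ => (1 : ℝ)) ∘ T^[i] := rfl
      rw [h1, ← Measure.map_map (hmeas 0) (hT.iterate i).measurable, (hT.iterate i).map_eq]⟩)
  filter_upwards [hslln] with ω hω
  have h1 : ∫ x, (S 0).indicator (fun _ => (1 : ℝ)) x ∂P = P.real A := integral_indicator_one hA
  rw [h1] at hω
  convert hω using 3 with N
  simp [hS, Set.indicator_apply, Finset.sum_boole]

end probability

/-! ### The MR map -/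

section mr
variable {p : ℕ} [Fact p.Prime]

/-- Two steps of the MR algorithm, seen on the remainders `α_{2n} - a_{2n} ∈ p ℤ_p`. -/
noncomputable def mrMap (p : ℕ) [Fact p.Prime] (x : ℚ_[p]) : ℚ_[p] :=
  halfStep (sFloor p) (halfStep (tFloor p) x)

lemma mrCQ_odd (hp : Odd p) {x : ℚ_[p]} (hx : ‖x‖ ≤ (p : ℝ) ^ (-1 : ℤ)) (i : ℕ) :
    mrCQ p x (2 * i + 1) = ((mrMap p)^[i] x)⁻¹ := by
  induction i with
  | zero => simp [mrCQ, mrFloor, sFloor_eq_zero hp hx]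
  | succ i ih =>
    have h1 : mrCQ p x (2 * i + 2) = (halfStep (tFloor p) ((mrMap p)^[i] x))⁻¹ := by
      rw [mrCQ, ih, mrFloor, if_neg (by simp), halfStep]
    rw [show 2 * (i + 1) + 1 = (2 * i + 2) + 1 by ring, mrCQ, h1, mrFloor,
      if_pos ⟨i + 1, by ring⟩, Function.iterate_succ_apply', mrMap]
    rfl

lemma mrPQ_odd (hp : Odd p) {x : ℚ_[p]} (hx : ‖x‖ ≤ (p : ℝ) ^ (-1 : ℤ)) (i : ℕ) :
    mrPQ p x (2 * i + 1) = tFloor p ((mrMap p)^[i] x)⁻¹ := by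
  rw [mrPQ, mrCQ_odd hp hx, mrFloor, if_neg (by simp)]

/-- The expansion can only end if some remainder is rational. -/
lemma mrInfinite_of_irrational (hp : Odd p) {x : ℚ_[p]} (hx : ‖x‖ ≤ (p : ℝ) ^ (-1 : ℤ))
    (h : ∀ i, (mrMap p)^[i] x ∉ Set.range ((↑) : ℚ → ℚ_[p])) : MRInfinite p x := by
  intro n hn
  rcases Nat.even_or_odd' n with ⟨i, rfl | rfl⟩
  · refine h i ⟨0, ?_⟩
    have h1 := mrCQ_odd hp hx i
    rw [mrCQ] at h1
    rw [mrPQ] at hn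
    rw [← hn, sub_self, inv_zero, eq_comm, inv_eq_zero] at h1
    rw [h1, Rat.cast_zero]
  · refine h i ⟨(mrPQ p x (2 * i + 1))⁻¹, ?_⟩
    rw [mrCQ_odd hp hx] at hn
    rw [Rat.cast_inv, ← hn, inv_inv]

variable [MeasurableSpace ℚ_[p]] [BorelSpace ℚ_[p]]

lemma measurable_mrMap (hp : Odd p) : Measurable (mrMap p) :=
  (measurable_halfStep (isFloorMap_sFloor hp)).comp (measurable_halfStep (isFloorMap_tFloor hp))

lemma measure_sHalfStep (hp : Odd p) (μ : Measure ℚ_[p]) [μ.IsAddHaarMeasure]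
    (hμ : μ (Metric.closedBall 0 ((p : ℝ) ^ (-1 : ℤ))) = 1) {B : Set ℚ_[p]}
    (hB : MeasurableSet B) :
    μ (halfStep (sFloor p) ⁻¹' B ∩ Metric.closedBall 0 ((p : ℝ) ^ (0 : ℤ))) =
      ENNReal.ofReal p * μ (B ∩ Metric.closedBall 0 ((p : ℝ) ^ (-1 : ℤ))) := by
  have h := measure_halfStep μ hμ (isFloorMap_sFloor hp) hB
  rw [hμ, mul_one, show (-(-1) - 1 : ℤ) = 0 by norm_num, measure_closedBall μ hμ 0 0] at h
  simpa using h

lemma measurePreserving_mrMap (hp : Odd p) (μ : Measure ℚ_[p]) [μ.IsAddHaarMeasure]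
    (hμ : μ (Metric.closedBall 0 ((p : ℝ) ^ (-1 : ℤ))) = 1) :
    MeasurePreserving (mrMap p) (μ.restrict (Metric.closedBall 0 ((p : ℝ) ^ (-1 : ℤ))))
      (μ.restrict (Metric.closedBall 0 ((p : ℝ) ^ (-1 : ℤ)))) := by
  have hp0 : (0 : ℝ) < p := by linarith [one_lt_base p]
  refine ⟨measurable_mrMap hp, Measure.ext fun B hB => ?_⟩
  have hB' := measurable_halfStep (isFloorMap_sFloor hp) hB
  rw [Measure.map_apply (measurable_mrMap hp) hB,
    Measure.restrict_apply (measurable_mrMap hp hB), Measure.restrict_apply hB]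
  have h := measure_halfStep μ hμ (isFloorMap_tFloor hp) hB'
  rw [measure_sHalfStep hp μ hμ hB, show (-0 - 1 : ℤ) = -1 by norm_num, hμ, one_mul,
    measure_closedBall μ hμ 0 0, zero_add, zpow_one, mul_comm] at h
  exact (ENNReal.mul_right_inj (ENNReal.ofReal_pos.2 hp0).ne' ENNReal.ofReal_ne_top).1 h

/-- The digit `a_{2n+1} = y` is independent of the next remainder, because every branch of `mrMap`
is onto and scales the measure by a constant. -/
lemma measure_digit_inter (hp : Odd p) (μ : Measure ℚ_[p]) [μ.IsAddHaarMeasure]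
    (hμ : μ (Metric.closedBall 0 ((p : ℝ) ^ (-1 : ℤ))) = 1) {y : ℚ} {k : ℤ}
    (hfl : tFloor p (y : ℚ_[p]) = y) (hy : ‖(y : ℚ_[p])‖ = (p : ℝ) ^ k) (hk : 0 < k)
    {B : Set ℚ_[p]} (hB : MeasurableSet B) :
    μ.restrict (Metric.closedBall 0 ((p : ℝ) ^ (-1 : ℤ)))
        ({x | tFloor p x⁻¹ = y} ∩ mrMap p ⁻¹' B) =
      ENNReal.ofReal ((p : ℝ) ^ (-2 * k + 1)) *
        μ.restrict (Metric.closedBall 0 ((p : ℝ) ^ (-1 : ℤ))) B := by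
  have hp1 := one_lt_base p
  have hp0 : (0 : ℝ) < p := by linarith
  have ht := isFloorMap_tFloor hp
  have hB' := measurable_halfStep (isFloorMap_sFloor hp) hB
  have hset : {x | tFloor p x⁻¹ = y} ∩ mrMap p ⁻¹' B ∩
      Metric.closedBall 0 ((p : ℝ) ^ (-1 : ℤ)) =
      {x | tFloor p x⁻¹ = y ∧ halfStep (tFloor p) x ∈
        halfStep (sFloor p) ⁻¹' B ∩ Metric.closedBall 0 ((p : ℝ) ^ (0 : ℤ))} := by
    ext x
    have h1 := halfStep_mem ht x
    have h2 : tFloor p x⁻¹ = y → x ∈ Metric.closedBall 0 ((p : ℝ) ^ (-1 : ℤ)) := by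
      intro h
      have h3 : (p : ℝ) ^ (0 : ℤ) < ‖x⁻¹‖ := by
        rw [← ht.norm_lt_iff, h, hy]
        exact zpow_lt_zpow_right₀ hp1 hk
      exact ((lt_norm_inv_iff 0 x).1 h3).1
    simp only [Set.mem_inter_iff, Set.mem_ofPred_eq, Set.mem_preimage, mrMap]
    tauto
  rw [Measure.restrict_apply ((ht.measurableSet_eq y).inter (measurable_mrMap hp hB)), hset,
    measure_branch μ hμ ht hfl hy hk (hB'.inter measurableSet_closedBall) Set.inter_subset_right,
    measure_sHalfStep hp μ hμ hB, Measure.restrict_apply hB, ← mul_assoc,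
    ← ENNReal.ofReal_mul (by positivity), zpow_add_one₀ hp0.ne']

end mr

/-- for an odd prime `p` and a nonzero `y ∈ ℤ[1/p] ∩ (-1/2, 1/2)` with
`v_p(y) = -k`, for `μ`-almost all `α ∈ pℤ_p` the MR expansion of `α` is infinite and
the frequency of `y` among the odd-position partial quotients equals `p^{-2k+1}`. -/
theorem stmt18 (p : ℕ) [Fact p.Prime] (hp : Odd p)
    [MeasurableSpace ℚ_[p]] [BorelSpace ℚ_[p]]
    (μ : Measure ℚ_[p]) [μ.IsAddHaarMeasure]
    (hμ : μ {α : ℚ_[p] | 1 ≤ vp p α} = 1)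
    (y : ℚ) (hy0 : y ≠ 0) (hyZ : InZinvp p y)
    (hylo : -(1 / 2 : ℚ) < y) (hyhi : y < (1 / 2 : ℚ))
    (k : ℤ) (hk : vp p ((y : ℚ) : ℚ_[p]) = ((-k : ℤ) : WithTop ℤ)) :
    ∀ᵐ α ∂μ, 1 ≤ vp p α →
      MRInfinite p α ∧
        Filter.Tendsto
          (fun N : ℕ =>
            (((Finset.range N).filter (fun i => mrPQ p α (2 * i + 1) = y)).card : ℝ) / N)
          Filter.atTop (nhds ((p : ℝ) ^ (-2 * k + 1))) := by
  have hp0 : (0 : ℝ) < p := by linarith [one_lt_base p]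
  set D : Set ℚ_[p] := Metric.closedBall 0 ((p : ℝ) ^ (-1 : ℤ)) with hD
  have hmemD : ∀ x : ℚ_[p], 1 ≤ vp p x ↔ x ∈ D := fun x => by
    rw [one_le_vp_iff, hD, mem_closedBall_zero_iff]
  have hμD : μ D = 1 := by
    rw [← hμ]
    congr 1
    ext x
    exact (hmemD x).symm
  have hy : (y : ℚ_[p]) ≠ 0 := by exact_mod_cast hy0
  have hyval : IsFloorVal p 0 (y : ℚ_[p]) y :=
    ⟨hyZ, by simpa using hylo, by simpa using hyhi, by simp⟩
  have hfl : tFloor p (y : ℚ_[p]) = y := isFloorVal_unique (tFloor_spec hp _) hyval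
  have hnorm : ‖(y : ℚ_[p])‖ = (p : ℝ) ^ k := by
    rw [vp, if_neg hy, WithTop.coe_eq_coe] at hk
    rw [Padic.norm_eq_zpow_neg_valuation hy, hk, neg_neg]
  -- If `y` were a `p`-adic integer then `0` would be a second value of `t(y)`.
  have hkpos : 0 < k := by
    by_contra hk0
    have h1 : ‖(y : ℚ_[p])‖ ≤ (p : ℝ) ^ (-((0 : ℕ) : ℤ)) := by
      rw [hnorm]
      exact zpow_le_zpow_right₀ (one_lt_base p).le (by simpa using hk0)
    exact hy0 (isFloorVal_unique hyval (isFloorVal_zero 0 h1))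
  set P := μ.restrict D with hP
  have hprob : IsProbabilityMeasure P := ⟨by rw [hP, Measure.restrict_apply_univ, hμD]⟩
  have hT : MeasurePreserving (mrMap p) P P := measurePreserving_mrMap hp μ hμD
  have hdigit := fun (B : Set ℚ_[p]) (hB : MeasurableSet B) =>
    measure_digit_inter hp μ hμD hfl hnorm hkpos hB
  have hPA : P {x | tFloor p x⁻¹ = y} = ENNReal.ofReal ((p : ℝ) ^ (-2 * k + 1)) := by
    have h := hdigit Set.univ MeasurableSet.univ
    rwa [Set.preimage_univ, Set.inter_univ, ← hD, ← hP, measure_univ, mul_one] at h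
  have hfreq := frequency_of_indep P hT ((isFloorMap_tFloor hp).measurableSet_eq y)
    (fun B hB => by rw [hPA]; exact hdigit B hB)
  rw [measureReal_def, hPA, ENNReal.toReal_ofReal (by positivity)] at hfreq
  have hirr : ∀ᵐ x ∂P, ∀ i, (mrMap p)^[i] x ∉ Set.range ((↑) : ℚ → ℚ_[p]) := by
    rw [ae_all_iff]
    intro i
    have h0 : ∀ᵐ x ∂P, x ∉ Set.range ((↑) : ℚ → ℚ_[p]) :=
      ae_restrict_of_ae (measure_eq_zero_iff_ae_notMem.1 ((Set.countable_range _).measure_zero μ))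
    exact (hT.iterate i).quasiMeasurePreserving.ae h0
  filter_upwards [(ae_restrict_iff' measurableSet_closedBall).1 (hfreq.and hirr)] with α hα hvp
  have hαD := (hmemD α).1 hvp
  have hx : ‖α‖ ≤ (p : ℝ) ^ (-1 : ℤ) := mem_closedBall_zero_iff.1 hαD
  refine ⟨mrInfinite_of_irrational hp hx (hα hαD).2, ?_⟩
  convert (hα hαD).1 using 5 with N
  ext i
  simp [mrPQ_odd hp hx]
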